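/- Let M₁, M₂ be positive integers, M = gcd(M₁, M₂), with s₁ = M₁/M even and s₂ = M₂/M odd. Then the set ((2π/M₁)ℤ) ∩ ((2π/M₂)(1/2 + ℤ)) ∩ ℝ⁺ equals {π/M + (2π/M)ℓ : ℓ ∈ ℕ ∪ {0}}, and its minimum element is π/M. -/

import Mathlib

open Real

theorem int_multiples_inter_half_int_multiples_inter_pos (M a b : ℕ) (hM : 0 < M) (ha : 0 < a)
    (hab : Nat.Coprime (2 * a) (2 * b + 1)) :
    {t : ℝ | ∃ k : ℤ, t = 2 * π / ((M * (2 * a) : ℕ) : ℝ) * k} ∩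
        {t : ℝ | ∃ k : ℤ, t = 2 * π / ((M * (2 * b + 1) : ℕ) : ℝ) * (1 / 2 + k)} ∩
        {t : ℝ | 0 < t} =
      {t : ℝ | ∃ ℓ : ℕ, t = π / M + (2 * π / M) * ℓ} := by
  have hM' : (0 : ℝ) < M := by exact_mod_cast hM
  have ha' : (0 : ℝ) < a := by exact_mod_cast ha
  have hb' : (0 : ℝ) < 2 * (b : ℝ) + 1 := by positivity
  have hπ := pi_pos
  push_cast
  ext t
  simp only [Set.mem_inter_iff, Set.mem_ofPred_eq]
  constructor
  · rintro ⟨⟨⟨k, hk⟩, ⟨j, hj⟩⟩, ht⟩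
    have hkj : k * (2 * b + 1) = (1 + 2 * j) * a := by
      have h := hk.symm.trans hj
      field_simp at h
      have h' : (k : ℝ) * (2 * b + 1) = (1 + 2 * j) * a := by linarith
      exact_mod_cast h'
    have hcop : IsCoprime (2 * (b : ℤ) + 1) a := by
      have h : Nat.Coprime (2 * b + 1) a := (Nat.Coprime.coprime_mul_left hab).symm
      exact_mod_cast Nat.isCoprime_iff_coprime.mpr h
    obtain ⟨c, hc⟩ : (2 * (b : ℤ) + 1) ∣ 1 + 2 * j :=
      hcop.dvd_of_dvd_mul_right ⟨k, by linarith⟩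
    have htc : t = π / M * c := by
      have hc' : (1 : ℝ) + 2 * j = (2 * b + 1) * c := by exact_mod_cast hc
      have hj' : (j : ℝ) = ((2 * b + 1) * c - 1) / 2 := by linarith
      rw [hj, hj']
      field_simp
      ring
    have hc0 : 0 < c := by
      rw [htc] at ht
      exact_mod_cast pos_of_mul_pos_right ht (by positivity)
    obtain ⟨m, hm⟩ : Odd c := by
      have h : Odd ((2 * (b : ℤ) + 1) * c) := ⟨j, by linarith⟩
      exact (Int.odd_mul.mp h).2
    lift m to ℕ using by lia
    refine ⟨m, ?_⟩
    rw [htc, hm]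
    push_cast
    ring
  · rintro ⟨ℓ, rfl⟩
    refine ⟨⟨⟨a * (2 * ℓ + 1), ?_⟩, ⟨2 * b * ℓ + b + ℓ, ?_⟩⟩, by positivity⟩
    · push_cast
      field_simp
      ring
    · push_cast
      field_simp
      ring

theorem stmt_18 (M₁ M₂ : ℕ) (h₁ : 0 < M₁) (h₂ : 0 < M₂)
    (M s₁ s₂ : ℕ) (hM : M = Nat.gcd M₁ M₂) (hs₁ : s₁ = M₁ / M) (hs₂ : s₂ = M₂ / M)
    (he : Even s₁) (ho : Odd s₂) :
    ({t : ℝ | ∃ k : ℤ, t = (2 * π / M₁) * k} ∩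
        {t : ℝ | ∃ k : ℤ, t = (2 * π / M₂) * (1 / 2 + k)} ∩ {t : ℝ | 0 < t} =
      {t : ℝ | ∃ ℓ : ℕ, t = π / M + (2 * π / M) * ℓ}) ∧
    IsLeast ({t : ℝ | ∃ k : ℤ, t = (2 * π / M₁) * k} ∩
        {t : ℝ | ∃ k : ℤ, t = (2 * π / M₂) * (1 / 2 + k)} ∩ {t : ℝ | 0 < t})
      (π / M) := by
  have hMpos : 0 < M := hM ▸ Nat.gcd_pos_of_pos_left _ h₁
  have hM₁ : M₁ = M * s₁ := by
    rw [hs₁, Nat.mul_div_cancel' (hM ▸ Nat.gcd_dvd_left _ _)]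
  have hM₂ : M₂ = M * s₂ := by
    rw [hs₂, Nat.mul_div_cancel' (hM ▸ Nat.gcd_dvd_right _ _)]
  have hcop : Nat.Coprime s₁ s₂ := by
    rw [hs₁, hs₂, hM]
    exact Nat.coprime_div_gcd_div_gcd (hM ▸ hMpos)
  clear hM hs₁ hs₂
  obtain ⟨a, rfl⟩ := even_iff_exists_two_mul.mp he
  obtain ⟨b, rfl⟩ := ho
  subst hM₁ hM₂
  have ha : 0 < a := by
    rcases Nat.eq_zero_or_pos a with rfl | h
    · simp at h₁
    · exact h
  rw [int_multiples_inter_half_int_multiples_inter_pos M a b hMpos ha hcop]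
  refine ⟨rfl, ⟨0, by simp⟩, ?_⟩
  rintro _ ⟨ℓ, rfl⟩
  have := pi_pos
  exact le_add_of_nonneg_right (by positivity)
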